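/- Fix integers K ≥ 2, N ≥ 1, t ≥ 1, a user i ∈ Fin K, and set S := (Fin K) \ {i}. Let d : Fin K → Fin N be a demand vector, let V be a vector space over GF(2), and for each file q ∈ Fin N and each (t+1)-element subset C ⊆ Fin K with i ∈ C let W_{q,C} ∈ V be an arbitrary vector. For each t-element subset A ⊆ S define the codeword Y_A := Σ_{k ∈ A} W_{d(k), (A ∪ {i}) \ {k}} (sum in V). If B ⊆ S is a (t+1)-element subset on which d is constant (all users in B request the same file), then Σ_{k ∈ B} Y_{B \ {k}} = 0. -/

import Mathlib

/-!
Each codeword contributes a sum over its own users, so the total is a sum over the ordered pairs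
`(k, l)` of distinct users in `B`. The sub-piece in the term of `(k, l)` is cached by
`(B ∪ {i}) \ {k, l}` and belongs to the file requested by every user in `B`: the terms of `(k, l)`
and `(l, k)` agree, and they cancel in characteristic 2.
-/

section

variable {U F V : Type*} [DecidableEq U]

theorem sum_sum_erase_eq_zero_of_add_swap_eq_zero [AddCommMonoid V] {s : Finset U} {f : U → U → V}
    (hf : ∀ k ∈ s, ∀ l ∈ s, k ≠ l → f k l + f l k = 0) :
    ∑ k ∈ s, ∑ l ∈ s.erase k, f k l = 0 := by
  have mem_offDiag_iff (p : U × U) : p ∈ s.offDiag ↔ p.1 ∈ s ∧ p.2 ∈ s.erase p.1 := by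
    simp only [Finset.mem_offDiag, Finset.mem_erase, ne_comm (a := p.1), and_comm (a := p.2 ∈ s)]
  rw [← Finset.sum_finset_product' s.offDiag s s.erase mem_offDiag_iff]
  refine Finset.sum_involution (fun p _ ↦ p.swap) ?_ ?_ ?_ (fun p _ ↦ p.swap_swap)
  · rintro ⟨k, l⟩ hp
    obtain ⟨hk, hl, hkl⟩ := Finset.mem_offDiag.mp hp
    exact hf k hk l hl hkl
  · rintro ⟨k, l⟩ hp - swap_eq
    exact (Finset.mem_offDiag.mp hp).2.2 (congrArg Prod.snd swap_eq)
  · rintro ⟨k, l⟩ hp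
    obtain ⟨hk, hl, hkl⟩ := Finset.mem_offDiag.mp hp
    exact Finset.mem_offDiag.mpr ⟨hl, hk, hkl.symm⟩

theorem erase_insert_erase_comm {s : Finset U} {i k l : U} (hik : i ≠ k) (hil : i ≠ l) :
    (insert i (s.erase k)).erase l = (insert i (s.erase l)).erase k := by
  rw [← Finset.erase_insert_of_ne hik, ← Finset.erase_insert_of_ne hil, Finset.erase_right_comm]

/-- The D2D codeword `Y_A` sent by user `i` to the users in `A`, where `d k` is the file requested
by user `k` and `W q C` is the sub-piece of file `q` cached by the users in `C`. The sub-pieces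
are given for all finite sets `C`, although a scheme with parameter `t` uses only `#C = t`. -/
def codeword [AddCommMonoid V] (W : F → Finset U → V) (d : U → F) (i : U) (A : Finset U) : V :=
  ∑ k ∈ A, W (d k) ((insert i A).erase k)

theorem stmt_5_general [AddCommGroup V] [Module (ZMod 2) V] (W : F → Finset U → V) {d : U → F}
    {i : U} {B : Finset U} (hi : i ∉ B) (hconst : ∀ k ∈ B, ∀ l ∈ B, d k = d l) :
    ∑ k ∈ B, codeword W d i (B.erase k) = 0 := by
  refine sum_sum_erase_eq_zero_of_add_swap_eq_zero fun k hk l hl _ ↦ ?_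
  have hik : i ≠ k := (ne_of_mem_of_not_mem hk hi).symm
  have hil : i ≠ l := (ne_of_mem_of_not_mem hl hi).symm
  rw [hconst k hk l hl, erase_insert_erase_comm hik hil]
  exact ZModModule.add_self _

end

/-- for the D2D codewords `Y A = ∑_{k ∈ A} W (d k) ((A ∪ {i}) \ {k})`
(sums in a GF(2) vector space `V`), if `B` is a `(t+1)`-subset of `S = (Fin K) \ {i}`
on which the demand `d` is constant, then `∑_{k ∈ B} Y (B \ {k}) = 0`. -/
theorem stmt_5 (K N t : ℕ) (hK : 2 ≤ K) (hN : 1 ≤ N) (ht : 1 ≤ t)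
    (i : Fin K) (d : Fin K → Fin N)
    (V : Type*) [AddCommGroup V] [Module (ZMod 2) V]
    (W : Fin N → Finset (Fin K) → V)
    (Y : Finset (Fin K) → V)
    (hY : ∀ A : Finset (Fin K), A ⊆ Finset.univ.erase i → A.card = t →
      Y A = ∑ k ∈ A, W (d k) (insert i A \ {k}))
    (B : Finset (Fin K)) (hBS : B ⊆ Finset.univ.erase i) (hBcard : B.card = t + 1)
    (hconst : ∀ k ∈ B, ∀ k' ∈ B, d k = d k') :
    ∑ k ∈ B, Y (B \ {k}) = 0 := by
  simp only [Finset.sdiff_singleton_eq_erase] at hY ⊢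
  rw [Finset.sum_congr rfl fun k hk ↦ hY (B.erase k) ((Finset.erase_subset k B).trans hBS)
    (by rw [Finset.card_erase_of_mem hk, hBcard, Nat.add_sub_cancel])]
  exact stmt_5_general W (fun hi ↦ Finset.notMem_erase i _ (hBS hi)) hconst
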